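/- arXiv:1603.05584 — 6 statements merged into one kernel-verified Lean document; each statement's English description precedes it below -/
import Mathlib

section
/- Fix an integer k ≥ 1 and let Z be a standard Gaussian random vector in ℝ^k. Define f_k : [0,∞) → ℝ by f_k(λ) = E[ log ‖Z + √λ · e₁‖² ], where e₁ is the first standard basis vector of ℝ^k (so that ‖Z + √λ e₁‖² has the noncentral chi-square distribution χ²_k(λ) with k degrees of freedom and noncentrality parameter λ). Then f_k is strictly increasing: for all 0 ≤ λ₁ < λ₂ one has f_k(λ₁) < f_k(λ₂). -/
/-!
The proof is a reflection argument in the first coordinate. Write `k = n + 1` and split `z = (x, w)`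
with `x ∈ ℝ`, `w ∈ ℝ^n`; the integrand becomes `log ((x + a)² + S)` with `a = √λ` and `S = ‖w‖²`.

For fixed `S ≥ 0` and `0 ≤ a < b`, put `h t = log (t² + S)`, `m = (a + b) / 2`, `d = (b - a) / 2`,
and let `φ` be the standard Gaussian density. Translating by `m`, the difference of the
one-dimensional integrals is `∫ φ(y - m) (h(y + d) - h(y - d)) dy`. Adding to the integrand
its reflection under `y ↦ -y` yields `(φ(y - m) - φ(y + m)) (h(y + d) - h(y - d))`, whose
two factors have the same sign, so it is positive for almost every `y`
(`integral_log_lt_of_lt`). Integrating this strict inequality over `w` gives the theorem.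

Integrability rests on `|log (x² + S)| ≤ x² + S + 2 |log x| 1_{|x| ≤ 1}` for `x ≠ 0`, on local
integrability of `log`, and on boundedness of the Gaussian density.
-/

open MeasureTheory ProbabilityTheory

/-- The standard Gaussian measure on `ℝ^k` (i.i.d. `N(0,1)` components). -/
noncomputable def stdGaussian (k : ℕ) : Measure (Fin k → ℝ) :=
  Measure.pi fun _ => gaussianReal 0 1

/-- `f_k(λ) = E[ log ‖Z + √λ e₁‖² ]` for a standard Gaussian vector `Z` in `ℝ^k`. -/
noncomputable def expLogNoncentralChiSq (k : ℕ) (lam : ℝ) : ℝ :=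
  ∫ z : Fin k → ℝ,
    Real.log (∑ i, (z i + if (i : ℕ) = 0 then Real.sqrt lam else 0) ^ 2) ∂(stdGaussian k)

/-- The integral of an almost everywhere positive function is positive. -/
lemma integral_pos_of_ae_pos {α : Type*} [MeasurableSpace α] {μ : Measure α} [NeZero μ]
    {f : α → ℝ} (hf : Integrable f μ) (hpos : ∀ᵐ x ∂μ, 0 < f x) : 0 < ∫ x, f x ∂μ := by
  have h0 : 0 ≤ᵐ[μ] f := by
    filter_upwards [hpos] with x hx using hx.le
  refine lt_of_le_of_ne (integral_nonneg_of_ae h0) fun h => ?_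
  have h1 := (integral_eq_zero_iff_of_nonneg_ae h0 hf).1 h.symm
  have h2 : ∀ᵐ x ∂μ, False := by
    filter_upwards [h1, hpos] with x hx hx'
    exact hx'.ne' hx
  exact NeZero.ne μ (by simpa using h2)

/-! ### Integrability -/

/-- `|log|` restricted to `[-1, 1]`: the singular part of the logarithm. -/
noncomputable def absLogNearZero (x : ℝ) : ℝ :=
  (Set.Icc (-1 : ℝ) 1).indicator (fun x => |Real.log x|) x

lemma absLogNearZero_nonneg (x : ℝ) : 0 ≤ absLogNearZero x :=
  Set.indicator_nonneg (fun _ _ => abs_nonneg _) x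

lemma integrable_absLogNearZero : Integrable absLogNearZero := by
  have h : IntervalIntegrable Real.log volume (-1) 1 := intervalIntegral.intervalIntegrable_log'
  rw [intervalIntegrable_iff_integrableOn_Icc_of_le (by norm_num)] at h
  exact (integrable_indicator_iff measurableSet_Icc).2 h.abs

lemma abs_log_sq_add_le {x S : ℝ} (hx : x ≠ 0) (hS : 0 ≤ S) :
    |Real.log (x ^ 2 + S)| ≤ x ^ 2 + S + 2 * absLogNearZero x := by
  have hx2 : 0 < x ^ 2 := by positivity
  have hnn := absLogNearZero_nonneg x
  rcases le_total 1 (x ^ 2 + S) with h | h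
  · rw [abs_of_nonneg (Real.log_nonneg h)]
    linarith [Real.log_le_sub_one_of_pos (show 0 < x ^ 2 + S by linarith)]
  · have hmem : x ∈ Set.Icc (-1 : ℝ) 1 := abs_le.1 ((sq_le_one_iff_abs_le_one x).1 (by linarith))
    have hl : absLogNearZero x = |Real.log x| := Set.indicator_of_mem hmem _
    have h1 : Real.log (x ^ 2) ≤ Real.log (x ^ 2 + S) :=
      Real.log_le_log hx2 (by linarith)
    rw [Real.log_pow] at h1
    push_cast at h1
    rw [abs_of_nonpos (Real.log_nonpos (by linarith) h), hl]
    linarith [neg_abs_le (Real.log x)]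

lemma gaussianPDFReal_zero_one (x : ℝ) :
    gaussianPDFReal 0 1 x = (Real.sqrt (2 * Real.pi))⁻¹ * Real.exp (-x ^ 2 / 2) := by
  simp [gaussianPDFReal]

lemma integrable_gaussianReal_iff {f : ℝ → ℝ} :
    Integrable f (gaussianReal 0 1) ↔ Integrable (fun x => gaussianPDFReal 0 1 x * f x) := by
  rw [gaussianReal_of_var_ne_zero _ one_ne_zero,
    integrable_withDensity_iff_integrable_smul' (measurable_gaussianPDF _ _)
      (ae_of_all _ fun _ => gaussianPDF_lt_top)]
  simp [gaussianPDF, gaussianPDFReal_nonneg]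

/-- A Lebesgue-integrable function is integrable for the Gaussian, whose density is bounded. -/
lemma integrable_gaussianReal_of_volume {f : ℝ → ℝ} (hf : Integrable f) :
    Integrable f (gaussianReal 0 1) := by
  rw [integrable_gaussianReal_iff]
  refine hf.bdd_mul (c := (Real.sqrt (2 * Real.pi))⁻¹)
    (measurable_gaussianPDFReal 0 1).aestronglyMeasurable (ae_of_all _ fun x => ?_)
  rw [Real.norm_of_nonneg (gaussianPDFReal_nonneg _ _ _), gaussianPDFReal_zero_one]
  refine mul_le_of_le_one_right (by positivity) (Real.exp_le_one_iff.2 ?_)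
  have := sq_nonneg x
  linarith

/-- The `x`-dependent part of the dominating function. -/
lemma integrable_bound (a : ℝ) :
    Integrable (fun x => (x + a) ^ 2 + 2 * absLogNearZero (x + a)) (gaussianReal 0 1) := by
  refine Integrable.add ?_ ?_
  · have h : MemLp (fun x : ℝ => x + a) 2 (gaussianReal 0 1) :=
      (memLp_id_gaussianReal (μ := 0) (v := 1) 2).add (memLp_const a)
    exact h.integrable_sq
  · exact (integrable_gaussianReal_of_volume (integrable_absLogNearZero.comp_add_right a)).const_mul 2

lemma ae_add_ne_zero (a : ℝ) : ∀ᵐ x ∂(gaussianReal 0 1), x + a ≠ 0 := by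
  have h : ∀ᵐ x : ℝ, x ≠ -a := Measure.ae_ne volume (-a)
  filter_upwards [(gaussianReal_absolutelyContinuous 0 one_ne_zero).ae_le h] with x hx h0
  exact hx (by linarith)

lemma integrable_log_sq_add (a : ℝ) {S : ℝ} (hS : 0 ≤ S) :
    Integrable (fun x => Real.log ((x + a) ^ 2 + S)) (gaussianReal 0 1) := by
  refine ((integrable_bound a).add (integrable_const S)).mono'
    (Measurable.aestronglyMeasurable (by fun_prop)) ?_
  filter_upwards [ae_add_ne_zero a] with x hx
  have := abs_log_sq_add_le hx hS
  simp only [Real.norm_eq_abs, Pi.add_apply]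
  linarith

/-! ### The one-dimensional inequality -/

/-- Positivity of the symmetrized integrand. The exceptional point `y = d` has to be removed
because `Real.log 0 = 0` when `S = 0`. -/
lemma symmetrized_pos {S m d y : ℝ} (hS : 0 ≤ S) (hm : 0 < m) (hd : 0 < d) (hy : 0 < y)
    (hyd : y ≠ d) :
    0 < gaussianPDFReal 0 1 (y - m) * (Real.log ((y + d) ^ 2 + S) - Real.log ((y - d) ^ 2 + S)) +
      gaussianPDFReal 0 1 (-y - m) *
        (Real.log ((-y + d) ^ 2 + S) - Real.log ((-y - d) ^ 2 + S)) := by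
  have hφ : gaussianPDFReal 0 1 (-y - m) < gaussianPDFReal 0 1 (y - m) := by
    rw [gaussianPDFReal_zero_one, gaussianPDFReal_zero_one]
    have : 0 < y * m := mul_pos hy hm
    have h2 : 0 < (Real.sqrt (2 * Real.pi))⁻¹ := by positivity
    refine mul_lt_mul_of_pos_left (Real.exp_lt_exp.2 ?_) h2
    nlinarith
  have hD : Real.log ((y - d) ^ 2 + S) < Real.log ((y + d) ^ 2 + S) := by
    have h1 : 0 < (y - d) ^ 2 := by
      have := sub_ne_zero.2 hyd
      positivity
    refine Real.log_lt_log (by linarith) ?_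
    nlinarith [mul_pos hy hd]
  have e1 : (-y + d) ^ 2 = (y - d) ^ 2 := by ring
  have e2 : (-y - d) ^ 2 = (y + d) ^ 2 := by ring
  rw [e1, e2]
  nlinarith [mul_pos (sub_pos.2 hφ) (sub_pos.2 hD)]

lemma integral_log_lt_of_lt {a b S : ℝ} (ha : 0 ≤ a) (hab : a < b) (hS : 0 ≤ S) :
    ∫ x, Real.log ((x + a) ^ 2 + S) ∂(gaussianReal 0 1) <
      ∫ x, Real.log ((x + b) ^ 2 + S) ∂(gaussianReal 0 1) := by
  set m := (a + b) / 2 with hm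
  set d := (b - a) / 2 with hd
  have hm0 : 0 < m := by linarith
  have hd0 : 0 < d := by linarith
  have hIa := integrable_gaussianReal_iff.1 (integrable_log_sq_add a hS)
  have hIb := integrable_gaussianReal_iff.1 (integrable_log_sq_add b hS)
  rw [integral_gaussianReal_eq_integral_smul one_ne_zero,
    integral_gaussianReal_eq_integral_smul one_ne_zero]
  simp only [smul_eq_mul]
  set K : ℝ → ℝ := fun y => gaussianPDFReal 0 1 (y - m) *
    (Real.log ((y + d) ^ 2 + S) - Real.log ((y - d) ^ 2 + S)) with hK
  have hKeq : K = fun y => (fun x => gaussianPDFReal 0 1 x * Real.log ((x + b) ^ 2 + S) -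
      gaussianPDFReal 0 1 x * Real.log ((x + a) ^ 2 + S)) (y - m) := by
    funext y
    have e1 : y - m + b = y + d := by rw [hm, hd]; ring
    have e2 : y - m + a = y - d := by rw [hm, hd]; ring
    simp only [hK, e1, e2]
    ring
  have hKint : Integrable K := by
    rw [hKeq]
    exact (hIb.sub hIa).comp_sub_right m
  have hKval : ∫ y, K y = (∫ x, gaussianPDFReal 0 1 x * Real.log ((x + b) ^ 2 + S)) -
      ∫ x, gaussianPDFReal 0 1 x * Real.log ((x + a) ^ 2 + S) := by
    rw [hKeq, integral_sub_right_eq_self (μ := volume) (fun x =>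
      gaussianPDFReal 0 1 x * Real.log ((x + b) ^ 2 + S) -
      gaussianPDFReal 0 1 x * Real.log ((x + a) ^ 2 + S)) m]
    exact integral_sub hIb hIa
  have hpos : 0 < ∫ y, (K y + K (-y)) := by
    refine integral_pos_of_ae_pos (hKint.add hKint.comp_neg) ?_
    filter_upwards [Measure.ae_ne volume (0 : ℝ), Measure.ae_ne volume d,
      Measure.ae_ne volume (-d)] with y h0 h1 h2
    rcases lt_or_gt_of_ne h0 with hy | hy
    · have := symmetrized_pos hS hm0 hd0 (neg_pos.2 hy) (fun h => h2 (by linarith))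
      rw [neg_neg] at this
      simp only [hK]
      linarith
    · exact symmetrized_pos hS hm0 hd0 hy h1
  rw [integral_add hKint hKint.comp_neg, integral_neg_eq_self K volume, hKval] at hpos
  linarith

/-! ### Reduction to one dimension -/

lemma expLogNoncentralChiSq_succ (n : ℕ) (lam : ℝ) :
    expLogNoncentralChiSq (n + 1) lam =
      ∫ p : ℝ × (Fin n → ℝ), Real.log ((p.1 + Real.sqrt lam) ^ 2 + ∑ i, p.2 i ^ 2)
        ∂((gaussianReal 0 1).prod (Measure.pi fun _ => gaussianReal 0 1)) := by
  rw [← (measurePreserving_piFinSuccAbove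
    (fun _ : Fin (n + 1) => gaussianReal 0 1) 0).integral_comp']
  simp only [expLogNoncentralChiSq, _root_.stdGaussian, Fin.sum_univ_succ]
  simp [MeasurableEquiv.piFinSuccAbove, Fin.insertNthEquiv, Fin.tail]

lemma integrable_log_prod (n : ℕ) (a : ℝ) :
    Integrable (fun p : ℝ × (Fin n → ℝ) => Real.log ((p.1 + a) ^ 2 + ∑ i, p.2 i ^ 2))
      ((gaussianReal 0 1).prod (Measure.pi fun _ => gaussianReal 0 1)) := by
  have hS : Integrable (fun w : Fin n → ℝ => ∑ i, w i ^ 2)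
      (Measure.pi fun _ => gaussianReal 0 1) := by
    refine integrable_finsetSum _ fun i _ => ?_
    exact integrable_comp_eval (μ := fun _ : Fin n => gaussianReal 0 1) (i := i)
      (f := fun x : ℝ => x ^ 2) (memLp_id_gaussianReal (μ := 0) (v := 1) 2).integrable_sq
  refine (((integrable_bound a).comp_fst (Measure.pi fun _ : Fin n => gaussianReal 0 1)).add
    (hS.comp_snd (gaussianReal 0 1))).mono'
    (Measurable.aestronglyMeasurable (by fun_prop)) ?_
  filter_upwards [Measure.quasiMeasurePreserving_fst.ae (ae_add_ne_zero a)] with p hp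
  have := abs_log_sq_add_le hp (S := ∑ i, p.2 i ^ 2) (Finset.sum_nonneg fun _ _ => sq_nonneg _)
  simp only [Real.norm_eq_abs, Pi.add_apply]
  linarith

/-- For every `k ≥ 1`, the function
`λ ↦ E[log ‖Z + √λ e₁‖²]` (the expected logarithm of a noncentral chi-square
random variable with `k` degrees of freedom and noncentrality parameter `λ`)
is strictly increasing on `[0, ∞)`. -/
theorem expLog_noncentralChiSq_strictMono (k : ℕ) (hk : 1 ≤ k)
    (lam₁ lam₂ : ℝ) (h₁ : 0 ≤ lam₁) (h₁₂ : lam₁ < lam₂) :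
    expLogNoncentralChiSq k lam₁ < expLogNoncentralChiSq k lam₂ := by
  obtain ⟨n, rfl⟩ : ∃ n, k = n + 1 := ⟨k - 1, by omega⟩
  have hi₁ := integrable_log_prod n (Real.sqrt lam₁)
  have hi₂ := integrable_log_prod n (Real.sqrt lam₂)
  rw [expLogNoncentralChiSq_succ, expLogNoncentralChiSq_succ, integral_prod_symm _ hi₁,
    integral_prod_symm _ hi₂, ← sub_pos,
    ← integral_sub hi₂.integral_prod_right hi₁.integral_prod_right]
  refine integral_pos_of_ae_pos (hi₂.integral_prod_right.sub hi₁.integral_prod_right)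
    (ae_of_all _ fun w => sub_pos.2 ?_)
  exact integral_log_lt_of_lt (Real.sqrt_nonneg _) (Real.sqrt_lt_sqrt h₁ h₁₂)
    (Finset.sum_nonneg fun _ _ => sq_nonneg _)
end

section
/- Let Θ be a random variable with values in [0,2π) whose law has a density p with respect to Lebesgue measure, and assume the positive part of p·log p is integrable, so that the differential entropy h(Θ) = −∫₀^{2π} p(θ) log p(θ) dθ satisfies h(Θ) > −∞ (it is then finite, since h(Θ) ≤ log 2π). Then for every α ∈ (0,1), ∫₀^{2π} p(θ) log|sin θ| dθ ≥ ( h(Θ) − log( 2 B((1−α)/2, 1/2) ) ) / α, where B(x,y) = Γ(x)Γ(y)/Γ(x+y) is the Beta function. In particular E[ log|sin Θ| ] > −∞. (The left-hand integral is well defined in [−∞,0] since log|sin θ| ≤ 0.) -/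
open MeasureTheory

/-!
This is Gibbs' inequality (non-negativity of relative entropy) for `p` against the density
`|sin θ| ^ (-α) / Z` on `[0, 2π)`. Its normalizing constant is `Z = 2 B((1 - α) / 2, 1 / 2)`: on a
quarter period the substitution `x = sin² θ` gives half a Beta integral (`sin_rpow_quarter`), and
reflections at `π / 2` and `π` give the other three quarters (`sin_rpow_full`).

The inequality is used pointwise, from `log x ≤ x - 1` with `x = |sin θ| ^ (-α) / (Z p)`:
`-α p log |sin| ≤ p log p + p log Z + |sin| ^ (-α) / Z - p`. The right-hand side is integrable with
integral `-h + log Z`. As the left-hand side is non-negative, this yields both the integrability of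
`p log |sin|` and the bound.
-/

open ProbabilityTheory in
/-- The substitution `x = sin² θ` pulls the density of the Beta distribution with parameters
`(1 - α) / 2` and `1 / 2` back to a multiple of `sin θ ^ (-α)` on a quarter period. -/
lemma sin_rpow_quarter (α : ℝ) (hα1 : α < 1) :
    IntegrableOn (fun θ => |Real.sin θ| ^ (-α)) (Set.Ioo 0 (Real.pi / 2)) ∧
    ∫ θ in Set.Ioo 0 (Real.pi / 2), |Real.sin θ| ^ (-α) = beta ((1 - α) / 2) (1 / 2) / 2 := by
  set b := beta ((1 - α) / 2) (1 / 2) with hb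
  have hb0 : 0 < b := beta_pos (by linarith) (by norm_num)
  have himg : (fun θ => Real.sin θ ^ 2) '' Set.Ioo 0 (Real.pi / 2) = Set.Ioo (0 : ℝ) 1 := by
    ext x
    constructor
    · rintro ⟨θ, ⟨h0, h1⟩, rfl⟩
      have hs : 0 < Real.sin θ := Real.sin_pos_of_pos_of_lt_pi h0 (by linarith)
      have hc : 0 < Real.cos θ := Real.cos_pos_of_mem_Ioo ⟨by linarith, h1⟩
      have := Real.sin_sq_add_cos_sq θ
      exact ⟨by positivity, by simp only; nlinarith⟩
    · rintro ⟨h0, h1⟩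
      refine ⟨Real.arcsin √x, ⟨Real.arcsin_pos.2 (Real.sqrt_pos.2 h0),
        Real.arcsin_lt_pi_div_two.2 ?_⟩, ?_⟩
      · rw [Real.sqrt_lt' one_pos]; simpa using h1
      · simp only
        rw [Real.sin_arcsin (by linarith [Real.sqrt_nonneg x]) (Real.sqrt_le_one.2 h1.le),
          Real.sq_sqrt h0.le]
  have hinj : Set.InjOn (fun θ => Real.sin θ ^ 2) (Set.Ioo 0 (Real.pi / 2)) := by
    rintro x ⟨hx0, hx1⟩ y ⟨hy0, hy1⟩ hxy
    have hsx : 0 < Real.sin x := Real.sin_pos_of_pos_of_lt_pi hx0 (by linarith)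
    have hsy : 0 < Real.sin y := Real.sin_pos_of_pos_of_lt_pi hy0 (by linarith)
    have h := (pow_left_inj₀ hsx.le hsy.le two_ne_zero).1 hxy
    exact Real.injOn_sin ⟨by linarith, hx1.le⟩ ⟨by linarith, hy1.le⟩ h
  have hlin : ∫⁻ θ in Set.Ioo 0 (Real.pi / 2),
      ENNReal.ofReal (2 / b * |Real.sin θ| ^ (-α)) = 1 := by
    rw [← lintegral_betaPDF_eq_one (α := (1 - α) / 2) (β := 1 / 2) (by linarith) (by norm_num),
      lintegral_betaPDF, ← himg, lintegral_image_eq_lintegral_abs_deriv_mul measurableSet_Ioo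
        (f := fun θ => Real.sin θ ^ 2)
        (fun x _ => ((Real.hasDerivAt_sin x).pow 2).hasDerivWithinAt) hinj]
    refine setLIntegral_congr_fun measurableSet_Ioo fun θ ⟨h0, h1⟩ => ?_
    have hs : 0 < Real.sin θ := Real.sin_pos_of_pos_of_lt_pi h0 (by linarith)
    have hc : 0 < Real.cos θ := Real.cos_pos_of_mem_Ioo ⟨by linarith, h1⟩
    rw [← ENNReal.ofReal_mul (abs_nonneg _), ← Real.cos_sq', ← Real.rpow_natCast_mul hs.le,
      ← Real.rpow_natCast_mul hc.le, abs_of_pos hs, abs_of_pos (by positivity), ← hb]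
    have e1 : Real.sin θ ^ (((2 : ℕ) : ℝ) * ((1 - α) / 2 - 1)) =
        Real.sin θ ^ (-α) * (Real.sin θ)⁻¹ := by
      rw [← Real.rpow_neg_one, ← Real.rpow_add hs]; congr 1; push_cast; ring
    have e2 : Real.cos θ ^ (((2 : ℕ) : ℝ) * (1 / 2 - 1)) = (Real.cos θ)⁻¹ := by
      rw [← Real.rpow_neg_one]; congr 1; push_cast; ring
    rw [e1, e2]
    congr 1
    field_simp
    norm_num
  have hnn : 0 ≤ᵐ[volume.restrict (Set.Ioo 0 (Real.pi / 2))]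
      fun θ => 2 / b * |Real.sin θ| ^ (-α) := .of_forall fun θ => by simp only [Pi.zero_apply]; positivity
  have hm : Measurable fun θ => 2 / b * |Real.sin θ| ^ (-α) := by
    have := Real.measurable_sin
    fun_prop
  have hint : IntegrableOn (fun θ => 2 / b * |Real.sin θ| ^ (-α)) (Set.Ioo 0 (Real.pi / 2)) :=
    ⟨hm.aestronglyMeasurable,
      (hasFiniteIntegral_iff_ofReal hnn).2 (by rw [hlin]; exact ENNReal.one_lt_top)⟩
  have hval := integral_eq_lintegral_of_nonneg_ae hnn hm.aestronglyMeasurable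
  rw [hlin, integral_const_mul, ENNReal.toReal_one] at hval
  refine ⟨?_, ?_⟩
  · have := hint.const_mul (b / 2)
    refine this.congr (.of_forall fun θ => ?_)
    simp only
    field_simp
  · field_simp at hval ⊢
    linarith

open ProbabilityTheory in
/-- The normalizing constant of the reference density proportional to `|sin θ| ^ (-α)`. -/
lemma sin_rpow_full (α : ℝ) (hα1 : α < 1) :
    IntegrableOn (fun θ => |Real.sin θ| ^ (-α)) (Set.Ico 0 (2 * Real.pi)) ∧
    ∫ θ in Set.Ico 0 (2 * Real.pi), |Real.sin θ| ^ (-α) =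
      2 * beta ((1 - α) / 2) (1 / 2) := by
  have hpi := Real.pi_pos
  obtain ⟨hi, hv⟩ := sin_rpow_quarter α hα1
  set f : ℝ → ℝ := fun θ => |Real.sin θ| ^ (-α) with hf
  have i1 : IntervalIntegrable f volume 0 (Real.pi / 2) :=
    (intervalIntegrable_iff_integrableOn_Ioo_of_le (by positivity)).2 hi
  have v1 : ∫ θ in (0)..(Real.pi / 2), f θ = beta ((1 - α) / 2) (1 / 2) / 2 := by
    rw [intervalIntegral.integral_of_le (by positivity), integral_Ioc_eq_integral_Ioo, hv]
  have r1 : (fun θ => f (Real.pi - θ)) = f := by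
    funext θ; simp [hf, Real.sin_pi_sub]
  have r2 : (fun θ => f (2 * Real.pi - θ)) = f := by
    funext θ; simp [hf, Real.sin_two_pi_sub]
  have i2 : IntervalIntegrable f volume (Real.pi / 2) Real.pi := by
    have := (i1.comp_sub_left Real.pi).symm
    rw [r1] at this
    convert! this using 1 <;> ring
  have v2 : ∫ θ in (Real.pi / 2)..Real.pi, f θ = ∫ θ in (0)..(Real.pi / 2), f θ := by
    have := intervalIntegral.integral_comp_sub_left (a := 0) (b := Real.pi / 2) f Real.pi
    rw [r1] at this
    rw [this]; congr 1 <;> ring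
  have i3 := i1.trans i2
  have v3 := intervalIntegral.integral_add_adjacent_intervals i1 i2
  have i4 : IntervalIntegrable f volume Real.pi (2 * Real.pi) := by
    have := (i3.comp_sub_left (2 * Real.pi)).symm
    rw [r2] at this
    convert! this using 1 <;> ring
  have v4 : ∫ θ in Real.pi..(2 * Real.pi), f θ = ∫ θ in (0)..Real.pi, f θ := by
    have := intervalIntegral.integral_comp_sub_left (a := 0) (b := Real.pi) f (2 * Real.pi)
    rw [r2] at this
    rw [this]; congr 1 <;> ring
  have v5 := intervalIntegral.integral_add_adjacent_intervals i3 i4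
  refine ⟨(intervalIntegrable_iff_integrableOn_Ico_of_le (by positivity)).1 (i3.trans i4), ?_⟩
  rw [integral_Ico_eq_integral_Ioc, ← intervalIntegral.integral_of_le (by positivity)]
  linarith

/-- If `Θ` is a random variable with values in `[0, 2π)` with density `p`
whose entropy `h(Θ) = −∫ p log p` satisfies `h(Θ) > −∞` (i.e. the positive part of
`p·log p` is integrable), then for every `α ∈ (0,1)`,
`∫ p(θ) log|sin θ| dθ ≥ (h(Θ) − log(2 B((1−α)/2, 1/2))) / α`,
where `B(x,y) = Γ(x)Γ(y)/Γ(x+y)`.  In particular `E[log|sin Θ|] > −∞`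
(i.e. `θ ↦ p(θ) log|sin θ|` is integrable on `[0, 2π)`). -/
theorem expLog_sin_lower_bound (p : ℝ → ℝ) (hmeas : Measurable p) (hpos : ∀ θ, 0 ≤ p θ)
    (hsupp : ∀ θ, θ ∉ Set.Ico (0 : ℝ) (2 * Real.pi) → p θ = 0)
    (hprob : ∫ θ in Set.Ico (0 : ℝ) (2 * Real.pi), p θ = 1)
    (hent : IntegrableOn (fun θ => max (p θ * Real.log (p θ)) 0)
      (Set.Ico (0 : ℝ) (2 * Real.pi)))
    (α : ℝ) (hα0 : 0 < α) (hα1 : α < 1) :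
    IntegrableOn (fun θ => p θ * Real.log |Real.sin θ|) (Set.Ico (0 : ℝ) (2 * Real.pi)) ∧
    ((-∫ θ in Set.Ico (0 : ℝ) (2 * Real.pi), p θ * Real.log (p θ)) -
        Real.log (2 * (Real.Gamma ((1 - α) / 2) * Real.Gamma (1 / 2) /
          Real.Gamma ((1 - α) / 2 + 1 / 2)))) / α ≤
      ∫ θ in Set.Ico (0 : ℝ) (2 * Real.pi), p θ * Real.log |Real.sin θ| := by
  set μ := volume.restrict (Set.Ico (0 : ℝ) (2 * Real.pi)) with hμ
  obtain ⟨hwi, hwv⟩ := sin_rpow_full α hα1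
  have hb := ProbabilityTheory.beta_pos (α := (1 - α) / 2) (β := 1 / 2) (by linarith) (by norm_num)
  rw [← ProbabilityTheory.beta]
  set Z := 2 * ProbabilityTheory.beta ((1 - α) / 2) (1 / 2) with hZ
  have hZ0 : 0 < Z := by positivity
  have hpi : Integrable p μ := by
    by_contra h
    rw [integral_undef h] at hprob
    exact zero_ne_one hprob
  have hplow : ∀ θ, -1 ≤ p θ * Real.log (p θ) := fun θ => by
    have h := InformationTheory.klFun_nonneg (hpos θ)
    rw [InformationTheory.klFun_apply] at h
    linarith [hpos θ]
  have hplogm : Measurable fun θ => p θ * Real.log (p θ) := by fun_prop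
  have hplog : Integrable (fun θ => p θ * Real.log (p θ)) μ := by
    refine (Integrable.add hent (integrable_const (1 : ℝ))).mono' hplogm.aestronglyMeasurable
      (.of_forall fun θ => ?_)
    rw [Real.norm_eq_abs, abs_le]
    simp only [Pi.add_apply]
    constructor <;> linarith [hplow θ, le_max_left (p θ * Real.log (p θ)) 0,
      le_max_right (p θ * Real.log (p θ)) 0]
  -- Gibbs' inequality in pointwise form, comparing `p` with the density `|sin| ^ (-α) / Z`.
  have key : ∀ θ, Real.sin θ ≠ 0 → -(α * (p θ * Real.log |Real.sin θ|)) ≤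
      p θ * Real.log (p θ) + p θ * Real.log Z + |Real.sin θ| ^ (-α) / Z - p θ := by
    intro θ hs
    have hs' : 0 < |Real.sin θ| := abs_pos.2 hs
    have hw : 0 < |Real.sin θ| ^ (-α) := Real.rpow_pos_of_pos hs' _
    rcases (hpos θ).eq_or_lt with h0 | h0
    · rw [← h0]; simp; positivity
    · have h := Real.log_le_sub_one_of_pos (x := |Real.sin θ| ^ (-α) / Z / p θ) (by positivity)
      rw [Real.log_div (by positivity) h0.ne', Real.log_div hw.ne' hZ0.ne',
        Real.log_rpow hs'] at h
      have h2 := mul_le_mul_of_nonneg_left h h0.le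
      have h3 : p θ * (|Real.sin θ| ^ (-α) / Z / p θ - 1) = |Real.sin θ| ^ (-α) / Z - p θ := by
        field_simp
      rw [h3] at h2
      linarith
  have hae : ∀ᵐ θ ∂μ, Real.sin θ ≠ 0 := by
    refine ae_restrict_of_ae ?_
    have : {θ : ℝ | Real.sin θ = 0}.Countable := by
      refine (Set.countable_range fun n : ℤ => (n : ℝ) * Real.pi).mono fun θ hθ => ?_
      exact Real.sin_eq_zero_iff.1 hθ
    exact this.ae_notMem volume
  have hA : Integrable (fun θ => p θ * Real.log (p θ) + p θ * Real.log Z) μ :=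
    hplog.add (hpi.mul_const _)
  have hB : Integrable (fun θ => p θ * Real.log (p θ) + p θ * Real.log Z +
      |Real.sin θ| ^ (-α) / Z) μ := hA.add (hwi.div_const Z)
  have hR : Integrable (fun θ => p θ * Real.log (p θ) + p θ * Real.log Z +
      |Real.sin θ| ^ (-α) / Z - p θ) μ := hB.sub hpi
  have hRv : ∫ θ, (p θ * Real.log (p θ) + p θ * Real.log Z +
      |Real.sin θ| ^ (-α) / Z - p θ) ∂μ = ∫ θ, p θ * Real.log (p θ) ∂μ + Real.log Z := by
    rw [integral_sub hB hpi, integral_add hA (hwi.div_const Z),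
      integral_add hplog (hpi.mul_const _), integral_mul_const, integral_div, hwv, hprob,
      div_self hZ0.ne']
    ring
  have hlog : ∀ θ, p θ * Real.log |Real.sin θ| ≤ 0 := fun θ =>
    mul_nonpos_of_nonneg_of_nonpos (hpos θ)
      (Real.log_nonpos (abs_nonneg _) (Real.abs_sin_le_one θ))
  have hI : Integrable (fun θ => p θ * Real.log |Real.sin θ|) μ := by
    have hm : Measurable fun θ => p θ * Real.log |Real.sin θ| := by
      have := Real.measurable_sin
      simp only [Real.log_abs]
      fun_prop
    refine (hR.div_const α).mono' hm.aestronglyMeasurable ?_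
    filter_upwards [hae] with θ hθ
    rw [Real.norm_eq_abs, abs_of_nonpos (hlog θ), le_div_iff₀ hα0]
    linarith [key θ hθ]
  refine ⟨hI, ?_⟩
  have hle := integral_mono_ae (hI.const_mul α).neg hR (hae.mono key)
  rw [hRv] at hle
  simp only [Pi.neg_apply] at hle
  rw [integral_neg, integral_const_mul] at hle
  rw [div_le_iff₀ hα0]
  linarith
end

section
/- Let n ≥ 1 and let Θ be a random vector with values in [0,2π)^n whose law has a density p with respect to Lebesgue measure on ℝ^n, and assume the positive part of p·log p is integrable (equivalently, the differential entropy h(Θ) = −∫ p log p satisfies h(Θ) > −∞). Then the law of the random vector cos(Θ) := (cos Θ₁, …, cos Θ_n) is absolutely continuous with respect to Lebesgue measure on ℝ^n, and its density q also has integrable positive part of q·log q; that is, the differential entropy h(cos(Θ)) = −∫ q log q satisfies h(cos(Θ)) > −∞. -/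
open MeasureTheory

/-!
The change of variables `x = cos θ` has Jacobian `J θ = ∏ i, |sin (θ i)|` and is at most `2 ^ n` to
one on `[0,2π)^n`, so `∫ J(θ) g(cos θ) dθ ≤ 2 ^ n ∫ g(x) dx` for every `g ≥ 0`
(`lintegral_cosJac_le`). Since `J > 0` almost everywhere, null sets pull back to null sets, and the
law of `cos Θ` has a density `q`.

For the entropy, `∫ (q log q)⁺ dx = ∫ p(θ) (log q(cos θ))⁺ dθ`. Young's inequality
`a b ≤ a log a + exp b` with `b = (log q)⁺ / 4` bounds the integrand by
`4 (p log p)⁺ + 4 + 4 q(cos θ) ^ (1/4)`, and weighted AM-GM gives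
`q(cos θ) ^ (1/4) ≤ J(θ) q(cos θ) + J(θ) ^ (-1/3)` (`mul_posLog_le`). The first summand is
integrable by the change of variables and the second because `|sin| ^ (-1/3)` is integrable on a
bounded interval.
-/

/-! ### The change of variables `x = cos θ` -/

/-- The cube `[0,2π)^n`. -/
def angleBox (n : ℕ) : Set (Fin n → ℝ) :=
  Set.univ.pi fun _ : Fin n => Set.Ico (0 : ℝ) (2 * Real.pi)

/-- The absolute value of the Jacobian determinant of the componentwise cosine. -/
noncomputable def cosJac {n : ℕ} (θ : Fin n → ℝ) : ℝ := ∏ i, |Real.sin (θ i)|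

lemma measurableSet_angleBox (n : ℕ) : MeasurableSet (angleBox n) :=
  MeasurableSet.univ_pi fun _ => measurableSet_Ico

lemma measurable_cosVec (n : ℕ) :
    Measurable (fun (θ : Fin n → ℝ) (i : Fin n) => Real.cos (θ i)) := by
  fun_prop

lemma measurable_cosJac (n : ℕ) : Measurable (cosJac : (Fin n → ℝ) → ℝ) := by
  unfold cosJac
  fun_prop

/-- The two halves of `[0,2π]`, on each of which the cosine is injective: `[π,2π]` for `true` and
`[0,π]` for `false`. -/
def halfPeriod (b : Bool) : Set ℝ :=
  if b then Set.Icc Real.pi (2 * Real.pi) else Set.Icc 0 Real.pi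

lemma measurableSet_halfPeriod (b : Bool) : MeasurableSet (halfPeriod b) := by
  unfold halfPeriod
  split_ifs <;> exact measurableSet_Icc

lemma injOn_cos_halfPeriod (b : Bool) : Set.InjOn Real.cos (halfPeriod b) := by
  cases b with
  | false => simpa [halfPeriod] using Real.injOn_cos
  | true =>
    intro x hx y hy h
    simp only [halfPeriod, if_true, Set.mem_Icc] at hx hy
    -- reflect into `[0,π]` by `x ↦ 2π - x`
    have := Real.injOn_cos
      (show 2 * Real.pi - x ∈ Set.Icc 0 Real.pi from ⟨by linarith, by linarith⟩)
      (show 2 * Real.pi - y ∈ Set.Icc 0 Real.pi from ⟨by linarith, by linarith⟩)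
      (by rw [Real.cos_two_pi_sub, Real.cos_two_pi_sub, h])
    linarith

lemma angleBox_subset (n : ℕ) :
    angleBox n ⊆ ⋃ k : Fin n → Bool, Set.univ.pi fun i => halfPeriod (k i) := by
  intro θ hθ
  refine Set.mem_iUnion.2 ⟨fun i => decide (Real.pi ≤ θ i), fun i _ => ?_⟩
  have h := hθ i trivial
  by_cases hi : Real.pi ≤ θ i
  · simp [halfPeriod, hi, h.2.le]
  · simp [halfPeriod, hi, h.1, (not_le.1 hi).le]

lemma lintegral_cosJac_halfPeriod_le {n : ℕ} (k : Fin n → Bool) (g : (Fin n → ℝ) → ENNReal) :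
    ∫⁻ θ in Set.univ.pi fun i => halfPeriod (k i),
      ENNReal.ofReal (cosJac θ) * g (fun i => Real.cos (θ i)) ≤ ∫⁻ x, g x := by
  set S : Set (Fin n → ℝ) := Set.univ.pi fun i => halfPeriod (k i)
  have hS : MeasurableSet S := MeasurableSet.univ_pi fun i => measurableSet_halfPeriod _
  let D : (Fin n → ℝ) → (Fin n → ℝ) →L[ℝ] (Fin n → ℝ) := fun θ =>
    ContinuousLinearMap.pi fun i =>
      (ContinuousLinearMap.toSpanSingleton ℝ (-Real.sin (θ i))).comp
        (ContinuousLinearMap.proj i)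
  have hD : ∀ θ ∈ S, HasFDerivWithinAt (fun (θ : Fin n → ℝ) (i : Fin n) => Real.cos (θ i))
      (D θ) S θ := by
    intro θ _
    refine HasFDerivAt.hasFDerivWithinAt ?_
    rw [hasFDerivAt_pi]
    intro i
    exact (Real.hasDerivAt_cos (θ i)).hasFDerivAt.comp θ
      (ContinuousLinearMap.proj (R := ℝ) (φ := fun _ : Fin n => ℝ) i).hasFDerivAt
  have hinj : Set.InjOn (fun (θ : Fin n → ℝ) (i : Fin n) => Real.cos (θ i)) S := by
    intro x hx y hy h
    funext i
    exact injOn_cos_halfPeriod (k i) (hx i trivial) (hy i trivial) (congrFun h i)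
  have hdet : ∀ θ, |(D θ).det| = cosJac θ := by
    intro θ
    simp only [D, ContinuousLinearMap.det_pi, cosJac, Finset.abs_prod]
    refine Finset.prod_congr rfl fun i _ => ?_
    simp [ContinuousLinearMap.det]
  have := lintegral_image_eq_lintegral_abs_det_fderiv_mul volume hS hD hinj g
  simp only [hdet] at this
  rw [← this]
  exact setLIntegral_le_lintegral _ _

/-- The change of variables on `[0,2π)^n`, covered by `2 ^ n` cells on each of which the
componentwise cosine is injective. -/
lemma lintegral_cosJac_le {n : ℕ} (g : (Fin n → ℝ) → ENNReal) :
    ∫⁻ θ in angleBox n, ENNReal.ofReal (cosJac θ) * g (fun i => Real.cos (θ i)) ≤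
      2 ^ n * ∫⁻ x, g x := by
  refine (lintegral_mono_set (angleBox_subset n)).trans ?_
  refine (lintegral_iUnion_le _ _).trans ?_
  rw [tsum_fintype]
  refine (Finset.sum_le_sum fun k _ => lintegral_cosJac_halfPeriod_le k g).trans ?_
  simp

/-! ### Positivity of the Jacobian and integrability of its power `-1/3` -/

lemma ae_cosJac_pos (n : ℕ) : ∀ᵐ θ : Fin n → ℝ, 0 < cosJac θ := by
  have h1 : ∀ᵐ x : ℝ, Real.sin x ≠ 0 := by
    have hc : Set.Countable {x : ℝ | Real.sin x = 0} := by
      refine (Set.countable_range fun m : ℤ => (m : ℝ) * Real.pi).mono fun x hx => ?_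
      exact Real.sin_eq_zero_iff.1 hx
    simpa [ae_iff] using hc.measure_zero volume
  have h2 : ∀ᵐ θ : Fin n → ℝ, ∀ i, Real.sin (θ i) ≠ 0 := by
    rw [ae_all_iff]
    intro i
    exact (Measure.tendsto_eval_ae_ae (μ := fun _ : Fin n => (volume : Measure ℝ))
      (i := i)).eventually h1
  filter_upwards [h2] with θ hθ
  exact Finset.prod_pos fun i _ => abs_pos.2 (hθ i)

/-- By periodicity it is enough to integrate over `[-π/2, π/2]`, where Jordan's inequality compares
`|sin x|` with `|x|`. -/
lemma integrableOn_abs_sin_rpow :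
    IntegrableOn (fun x : ℝ => |Real.sin x| ^ (-(1 / 3) : ℝ)) (Set.Ico 0 (2 * Real.pi)) := by
  have hper : Function.Periodic (fun x : ℝ => |Real.sin x| ^ (-(1 / 3) : ℝ)) Real.pi := by
    intro x
    simp [Real.sin_add_pi]
  have hpi := Real.pi_pos
  have h0 : IntervalIntegrable (fun x : ℝ => |x| ^ (-(1 / 3) : ℝ)) volume
      (-(Real.pi / 2)) (Real.pi / 2) := by
    have hp : IntervalIntegrable (fun x : ℝ => |x| ^ (-(1 / 3) : ℝ)) volume 0 (Real.pi / 2) := by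
      refine (intervalIntegral.intervalIntegrable_rpow' (r := -(1 / 3)) (by norm_num)).congr ?_
      intro x hx
      rw [Set.uIoc_of_le (by positivity)] at hx
      simp [abs_of_pos hx.1]
    refine IntervalIntegrable.trans (b := 0) ?_ hp
    have := (IntervalIntegrable.iff_comp_neg).1 hp
    simpa using this.symm
  have h1 : IntervalIntegrable (fun x : ℝ => |Real.sin x| ^ (-(1 / 3) : ℝ)) volume
      (-(Real.pi / 2)) (Real.pi / 2) := by
    refine (h0.const_mul ((2 / Real.pi) ^ (-(1 / 3) : ℝ))).mono_fun
      (by fun_prop : Measurable _).aestronglyMeasurable ?_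
    rw [Filter.EventuallyLE, ae_restrict_iff' measurableSet_uIoc]
    have hne : ∀ᵐ x : ℝ, x ≠ 0 := by simp [ae_iff]
    filter_upwards [hne] with x hx0 hx
    rw [Set.uIoc_of_le (by linarith)] at hx
    -- Jordan's inequality `2 / π * |x| ≤ |sin x|`
    have hj := Real.mul_abs_le_abs_sin (x := x) (abs_le.2 ⟨hx.1.le, hx.2⟩)
    rw [Real.norm_of_nonneg (by positivity), Real.norm_of_nonneg (by positivity),
      ← Real.mul_rpow (by positivity) (by positivity)]
    exact Real.rpow_le_rpow_of_nonpos (by positivity) hj (by norm_num)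
  have h2 := hper.intervalIntegrable hpi.ne' (t := -(Real.pi / 2))
    (by convert h1 using 1; ring) 0 (2 * Real.pi)
  rwa [intervalIntegrable_iff_integrableOn_Ico_of_le (by positivity)] at h2

lemma lintegral_cosJac_rpow_lt_top (n : ℕ) :
    ∫⁻ θ in angleBox n, ENNReal.ofReal (cosJac θ ^ (-(1 / 3) : ℝ)) < ⊤ := by
  have h : Integrable (fun θ : Fin n → ℝ => ∏ i, |Real.sin (θ i)| ^ (-(1 / 3) : ℝ))
      (volume.restrict (angleBox n)) := by
    rw [angleBox, volume_pi, Measure.restrict_pi_pi]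
    exact Integrable.fintype_prod fun _ => integrableOn_abs_sin_rpow
  simp only [cosJac]
  simp_rw [← Real.finsetProd_rpow _ _ (fun i _ => abs_nonneg _)]
  exact h.lintegral_lt_top

/-! ### The pointwise entropy bound -/

/-- Young's inequality `a * b ≤ a * log a + exp b` with `b = (log Q)⁺ / 4`, followed by weighted
AM-GM on `Q ^ (1/4) = (s * Q) ^ (1/4) * (s ^ (-1/3)) ^ (3/4)`. -/
lemma mul_posLog_le {a Q s : ℝ} (ha : 0 ≤ a) (hQ : 0 ≤ Q) (hs : 0 < s) :
    a * max (Real.log Q) 0 ≤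
      4 * max (a * Real.log a) 0 + 4 * (1 + s * Q + s ^ (-(1 / 3) : ℝ)) := by
  have hsr : 0 < s ^ (-(1 / 3) : ℝ) := Real.rpow_pos_of_pos hs _
  have hsQ : 0 ≤ s * Q := by positivity
  have hamgm : Q ^ (1 / 4 : ℝ) ≤ s * Q + s ^ (-(1 / 3) : ℝ) := by
    have h := Real.geom_mean_le_arith_mean2_weighted (w₁ := 1 / 4) (w₂ := 3 / 4) (by norm_num)
      (by norm_num) hsQ hsr.le (by norm_num)
    have e : (s * Q) ^ (1 / 4 : ℝ) * (s ^ (-(1 / 3) : ℝ)) ^ (3 / 4 : ℝ) = Q ^ (1 / 4 : ℝ) := by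
      rw [Real.mul_rpow hs.le hQ, ← Real.rpow_mul hs.le, mul_right_comm, ← Real.rpow_add hs]
      norm_num
    rw [e] at h
    linarith
  have hexp : Real.exp (max (Real.log Q) 0 / 4) ≤ 1 + Q ^ (1 / 4 : ℝ) := by
    have hQr : 0 ≤ Q ^ (1 / 4 : ℝ) := by positivity
    rcases le_or_gt (Real.log Q) 0 with h | h
    · rw [max_eq_right h]
      simpa using hQr
    · have hQ0 : 0 < Q := hQ.lt_of_ne (by rintro rfl; simp at h)
      rw [max_eq_left h.le, Real.rpow_def_of_pos hQ0, mul_one_div]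
      linarith
  set b := max (Real.log Q) 0 / 4 with hb
  have hyoung : a * b ≤ max (a * Real.log a) 0 + Real.exp b := by
    rcases ha.eq_or_lt with rfl | ha
    · simp [Real.exp_nonneg]
    · have h := Real.log_le_sub_one_of_pos (x := Real.exp b / a) (by positivity)
      rw [Real.log_div (Real.exp_ne_zero _) ha.ne', Real.log_exp] at h
      have h' := mul_le_mul_of_nonneg_left h ha.le
      have e : a * (Real.exp b / a - 1) = Real.exp b - a := by field_simp
      rw [e] at h'
      have := le_max_left (a * Real.log a) 0
      nlinarith
  have : a * max (Real.log Q) 0 = 4 * (a * b) := by rw [hb]; ring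
  linarith

/-! ### The law of `cos Θ` -/

/-- A null set `A` has `∫ J(θ) 1_A(cos θ) dθ = 0`, and `J > 0` almost everywhere. -/
lemma map_cos_absolutelyContinuous {n : ℕ} {μ : Measure (Fin n → ℝ)} (hμ : μ ≪ volume)
    (hbox : μ (angleBox n)ᶜ = 0) :
    μ.map (fun θ i => Real.cos (θ i)) ≪ volume := by
  refine Measure.AbsolutelyContinuous.mk fun A hA hA0 => ?_
  rw [Measure.map_apply (measurable_cosVec n) hA]
  have hT := (measurable_cosVec n) hA
  have hm : Measurable fun θ : Fin n → ℝ => ENNReal.ofReal (cosJac θ) *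
      A.indicator (1 : (Fin n → ℝ) → ENNReal) (fun i => Real.cos (θ i)) :=
    ((measurable_cosJac n).ennreal_ofReal).mul
      ((measurable_one.indicator hA).comp (measurable_cosVec n))
  have h := lintegral_cosJac_le (n := n) (A.indicator 1)
  rw [lintegral_indicator_one hA, hA0, mul_zero, nonpos_iff_eq_zero,
    lintegral_eq_zero_iff hm,
    Filter.EventuallyEq, ae_restrict_iff' (measurableSet_angleBox n)] at h
  have hbox' : ∀ᵐ θ ∂μ, θ ∈ angleBox n := hbox
  rw [measure_eq_zero_iff_ae_notMem]
  filter_upwards [hμ.ae_le h, hμ.ae_le (ae_cosJac_pos n), hbox'] with θ h1 h2 h3 h4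
  have h4' : (fun i => Real.cos (θ i)) ∈ A := h4
  have h5 := h1 h3
  simp only [Set.indicator_of_mem h4', Pi.one_apply, mul_one, Pi.zero_apply,
    ENNReal.ofReal_eq_zero] at h5
  exact h5.not_gt h2

/-- Let `Θ` be a random vector with values in `[0,2π)^n` whose law has a
density `p` with respect to Lebesgue measure on `ℝ^n` such that the positive part of
`p·log p` is integrable (i.e. `h(Θ) > −∞`).  Then the law of `cos(Θ)` (componentwise cosine)
is absolutely continuous with respect to Lebesgue measure on `ℝ^n`, with a density `q` whose
`q·log q` also has integrable positive part (i.e. `h(cos(Θ)) > −∞`). -/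
theorem entropy_cos_ne_bot (n : ℕ) (hn : 1 ≤ n) (p : (Fin n → ℝ) → ℝ)
    (hmeas : Measurable p) (hpos : ∀ θ, 0 ≤ p θ)
    (hsupp : ∀ θ : Fin n → ℝ,
      θ ∉ Set.univ.pi (fun _ : Fin n => Set.Ico (0 : ℝ) (2 * Real.pi)) → p θ = 0)
    (hprob : IsProbabilityMeasure
      ((volume : Measure (Fin n → ℝ)).withDensity fun θ => ENNReal.ofReal (p θ)))
    (hent : Integrable (fun θ => max (p θ * Real.log (p θ)) 0)
      (volume : Measure (Fin n → ℝ))) :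
    ∃ q : (Fin n → ℝ) → ℝ, Measurable q ∧ (∀ x, 0 ≤ q x) ∧
      ((volume : Measure (Fin n → ℝ)).withDensity (fun θ => ENNReal.ofReal (p θ))).map
          (fun θ i => Real.cos (θ i)) =
        (volume : Measure (Fin n → ℝ)).withDensity (fun x => ENNReal.ofReal (q x)) ∧
      Integrable (fun x => max (q x * Real.log (q x)) 0)
        (volume : Measure (Fin n → ℝ)) := by
  classical
  set T : (Fin n → ℝ) → (Fin n → ℝ) := fun θ i => Real.cos (θ i) with hT
  have hTm : Measurable T := measurable_cosVec n
  set μ : Measure (Fin n → ℝ) := volume.withDensity fun θ => ENNReal.ofReal (p θ) with hμdef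
  have hpm : Measurable fun θ => ENNReal.ofReal (p θ) := hmeas.ennreal_ofReal
  have hbox : μ (angleBox n)ᶜ = 0 := by
    rw [hμdef, withDensity_apply _ (measurableSet_angleBox n).compl,
      setLIntegral_congr_fun (g := 0) (measurableSet_angleBox n).compl
        (fun θ hθ => by simp [hsupp θ hθ])]
    simp
  have hac : μ.map T ≪ volume :=
    map_cos_absolutelyContinuous (withDensity_absolutelyContinuous _ _) hbox
  have hpT : IsProbabilityMeasure (μ.map T) := Measure.isProbabilityMeasure_map hTm.aemeasurable
  set q : (Fin n → ℝ) → ℝ := fun x => ((μ.map T).rnDeriv volume x).toReal with hq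
  have hqm : Measurable q := (Measure.measurable_rnDeriv _ _).ennreal_toReal
  have hq0 : ∀ x, 0 ≤ q x := fun x => ENNReal.toReal_nonneg
  have hmap : μ.map T = volume.withDensity fun x => ENNReal.ofReal (q x) := by
    conv_lhs => rw [← Measure.withDensity_rnDeriv_eq _ _ hac]
    refine withDensity_congr_ae ?_
    filter_upwards [Measure.rnDeriv_lt_top (μ.map T) volume] with x hx
    exact (ENNReal.ofReal_toReal hx.ne).symm
  refine ⟨q, hqm, hq0, hmap, ?_⟩
  have hqint : ∫⁻ x, ENNReal.ofReal (q x) = 1 := by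
    have := measure_univ (μ := μ.map T)
    rwa [hmap, withDensity_apply _ MeasurableSet.univ, Measure.restrict_univ] at this
  have hLm : Measurable fun x => ENNReal.ofReal (max (Real.log (q x)) 0) := by fun_prop
  have hLTm : Measurable fun θ => ENNReal.ofReal (max (Real.log (q (T θ))) 0) := hLm.comp hTm
  have htrans : ∫⁻ x, ENNReal.ofReal (max (q x * Real.log (q x)) 0) =
      ∫⁻ θ, ENNReal.ofReal (p θ * max (Real.log (q (T θ))) 0) := by
    calc ∫⁻ x, ENNReal.ofReal (max (q x * Real.log (q x)) 0)
        = ∫⁻ x, ENNReal.ofReal (q x) * ENNReal.ofReal (max (Real.log (q x)) 0) := by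
          refine lintegral_congr fun x => ?_
          rw [← ENNReal.ofReal_mul (hq0 x), mul_max_of_nonneg _ _ (hq0 x), mul_zero]
      _ = ∫⁻ x, ENNReal.ofReal (max (Real.log (q x)) 0) ∂(μ.map T) := by
          rw [hmap, lintegral_withDensity_eq_lintegral_mul _ hqm.ennreal_ofReal hLm]
          rfl
      _ = ∫⁻ θ, ENNReal.ofReal (max (Real.log (q (T θ))) 0) ∂μ := lintegral_map hLm hTm
      _ = ∫⁻ θ, ENNReal.ofReal (p θ * max (Real.log (q (T θ))) 0) := by
          rw [hμdef, lintegral_withDensity_eq_lintegral_mul _ hpm hLTm]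
          refine lintegral_congr fun θ => ?_
          simp [ENNReal.ofReal_mul (hpos θ)]
  let F : (Fin n → ℝ) → ENNReal := fun θ =>
    4 * (1 + ENNReal.ofReal (cosJac θ) * ENNReal.ofReal (q (T θ)) +
      ENNReal.ofReal (cosJac θ ^ (-(1 / 3) : ℝ)))
  have hJm := measurable_cosJac n
  have hvol : volume (angleBox n) < ⊤ := by
    rw [angleBox, Real.volume_pi_Ico]
    exact ENNReal.prod_lt_top fun _ _ => ENNReal.ofReal_lt_top
  have hF : ∫⁻ θ in angleBox n, F θ < ⊤ := by
    have hm2 : Measurable fun θ : Fin n → ℝ =>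
        ENNReal.ofReal (cosJac θ) * ENNReal.ofReal (q (T θ)) :=
      hJm.ennreal_ofReal.mul (hqm.comp hTm).ennreal_ofReal
    have hm3 : Measurable fun θ : Fin n → ℝ => ENNReal.ofReal (cosJac θ ^ (-(1 / 3) : ℝ)) :=
      (hJm.pow_const _).ennreal_ofReal
    have hm1 : Measurable fun θ : Fin n → ℝ =>
        1 + ENNReal.ofReal (cosJac θ) * ENNReal.ofReal (q (T θ)) := measurable_const.add hm2
    have hm : Measurable fun θ : Fin n → ℝ =>
        1 + ENNReal.ofReal (cosJac θ) * ENNReal.ofReal (q (T θ)) +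
          ENNReal.ofReal (cosJac θ ^ (-(1 / 3) : ℝ)) := hm1.add hm3
    rw [lintegral_const_mul _ hm,
      lintegral_add_right _ hm3, lintegral_add_right _ hm2]
    refine ENNReal.mul_lt_top (by norm_num) (ENNReal.add_lt_top.2
      ⟨ENNReal.add_lt_top.2 ⟨by simpa using hvol, ?_⟩, lintegral_cosJac_rpow_lt_top n⟩)
    refine (lintegral_cosJac_le fun x => ENNReal.ofReal (q x)).trans_lt ?_
    rw [hqint, mul_one]
    exact ENNReal.pow_lt_top (by norm_num)
  have hbound : ∀ᵐ θ : Fin n → ℝ, ENNReal.ofReal (p θ * max (Real.log (q (T θ))) 0) ≤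
      4 * ENNReal.ofReal (max (p θ * Real.log (p θ)) 0) + (angleBox n).indicator F θ := by
    filter_upwards [ae_cosJac_pos n] with θ hθ
    by_cases hm : θ ∈ angleBox n
    · rw [Set.indicator_of_mem hm]
      have hr : 0 ≤ cosJac θ ^ (-(1 / 3) : ℝ) := Real.rpow_nonneg hθ.le _
      have hjq : 0 ≤ cosJac θ * q (T θ) := mul_nonneg hθ.le (hq0 _)
      refine (ENNReal.ofReal_le_ofReal (mul_posLog_le (hpos θ) (hq0 _) hθ)).trans_eq ?_
      rw [ENNReal.ofReal_add (by positivity) (by positivity),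
        ENNReal.ofReal_mul (by norm_num), ENNReal.ofReal_mul (by norm_num),
        ENNReal.ofReal_add (by positivity) hr, ENNReal.ofReal_add (by norm_num) hjq,
        ENNReal.ofReal_mul hθ.le]
      simp [F]
    · simp [hsupp θ hm]
  have hfin : ∫⁻ x, ENNReal.ofReal (max (q x * Real.log (q x)) 0) < ⊤ := by
    rw [htrans]
    refine (lintegral_mono_ae hbound).trans_lt ?_
    have hm1 : Measurable fun θ => ENNReal.ofReal (max (p θ * Real.log (p θ)) 0) := by fun_prop
    rw [lintegral_add_left (hm1.const_mul _), lintegral_const_mul _ hm1,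
      lintegral_indicator (measurableSet_angleBox n)]
    exact ENNReal.add_lt_top.2 ⟨ENNReal.mul_lt_top (by norm_num) hent.lintegral_lt_top, hF⟩
  have hqlm : Measurable fun x => max (q x * Real.log (q x)) 0 := by fun_prop
  exact (lintegral_ofReal_ne_top_iff_integrable hqlm.aestronglyMeasurable
    (Filter.Eventually.of_forall fun x => le_max_right _ _)).1 hfin.ne
end

section
/- Let m ≥ 1 and let V be a random vector in ℝ^m whose law has a density p with respect to Lebesgue measure such that the positive part of p·log p is integrable (i.e., the differential entropy h(V) = −∫ p log p satisfies h(V) > −∞), and such that E[‖V‖²] < ∞. Then inf over unit vectors x ∈ ℝ^m (‖x‖ = 1) of E[ log |⟨V, x⟩| ] is > −∞; that is, there exists a finite constant c such that E[ log |⟨V, x⟩| ] ≥ c for every x ∈ ℝ^m with ‖x‖ = 1. (Each expectation E[log|⟨V,x⟩|] is well defined in [−∞,∞) since its positive part is dominated by ½ log(1+‖V‖²) up to a constant.) -/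
open MeasureTheory

/-!
Entropy duality turns a statement about `p` into one about a Gaussian weight.  For `p ≥ 0` and any
real `b`, `s`, Young's inequality gives `p * b ≤ p * log p + p * s + exp (-s) * exp b`.  Taking
`s = ‖v‖²` and `b = -(1/2) * log |⟨v, x⟩|` bounds the dangerous negative part of
`p * log |⟨v, x⟩|` by `p log p`, the second moment, and `exp (-‖v‖²) * |⟨v, x⟩| ^ (-1/2)`.
The last function is integrable because `|t| ^ (-1/2)` is locally integrable on `ℝ`, and by rotation
invariance of Lebesgue measure its integral is the same for every unit vector `x`.  The positive
part of the logarithm is controlled by the second moment via Cauchy–Schwarz.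
-/

lemma integrable_exp_neg_sq_mul_abs_rpow :
    Integrable (fun t : ℝ => Real.exp (-t ^ 2) * |t| ^ (-(1 / 2) : ℝ)) := by
  have h : IntegrableOn (fun t : ℝ => Real.exp (-t ^ 2) * |t| ^ (-(1 / 2) : ℝ)) (Set.Ioi 0) := by
    refine (integrableOn_rpow_mul_exp_neg_mul_sq (b := 1) one_pos
      (s := -(1 / 2)) (by norm_num)).congr_fun ?_ measurableSet_Ioi
    intro t ht
    simp only [abs_of_pos (Set.mem_Ioi.1 ht)]
    rw [mul_comm]
    simp
  have h' : IntegrableOn (fun t : ℝ => Real.exp (-t ^ 2) * |t| ^ (-(1 / 2) : ℝ)) (Set.Iio 0) := by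
    have := h.comp_neg
    simpa using this
  rw [← integrableOn_univ, ← Set.Iic_union_Ioi (a := (0 : ℝ))]
  exact ((integrableOn_Iic_iff_integrableOn_Iio (by simp)).2 h').union h

lemma integrable_gaussian_mul_abs_coord_rpow (m : ℕ) (i₀ : Fin m) :
    Integrable (fun v : Fin m → ℝ =>
      Real.exp (-∑ i, (v i) ^ 2) * |v i₀| ^ (-(1 / 2) : ℝ)) := by
  have h := Integrable.fintype_prod (μ := fun _ : Fin m => (volume : Measure ℝ))
    (f := fun i t => Real.exp (-t ^ 2) * (if i = i₀ then |t| ^ (-(1 / 2) : ℝ) else 1)) (by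
      intro i
      by_cases hi : i = i₀
      · simpa [hi] using integrable_exp_neg_sq_mul_abs_rpow
      · simpa [hi] using integrable_exp_neg_mul_sq (b := 1) one_pos)
  refine h.congr (Filter.Eventually.of_forall fun v => ?_)
  simp only [Finset.prod_mul_distrib, ← Real.exp_sum, Finset.sum_neg_distrib,
    Finset.prod_ite_eq', Finset.mem_univ, if_true]

/-- A rotation of `ℝ^m`, in coordinates, whose `i₀`-th coordinate is the inner product with a given
unit vector. -/
lemma exists_rotation (m : ℕ) (i₀ : Fin m) (x : Fin m → ℝ) (hx : ∑ i, (x i) ^ 2 = 1) :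
    ∃ T : (Fin m → ℝ) → (Fin m → ℝ), MeasurePreserving T volume volume ∧
      (∀ v, ∑ i, (T v i) ^ 2 = ∑ i, (v i) ^ 2) ∧ ∀ v, T v i₀ = ∑ i, v i * x i := by
  have hnorm : ‖WithLp.toLp 2 x‖ = 1 := by
    rw [EuclideanSpace.norm_eq]
    simp [hx]
  obtain ⟨b, hb⟩ := Orthonormal.exists_orthonormalBasis_extension_of_card_eq (𝕜 := ℝ)
    (E := EuclideanSpace ℝ (Fin m)) (ι := Fin m) (by simp)
    (v := fun _ => WithLp.toLp 2 x) (s := {i₀}) (by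
      constructor
      · intro i
        exact hnorm
      · intro i j hij
        exact absurd (Subsingleton.elim i j) hij)
  refine ⟨fun v => WithLp.ofLp (b.repr (WithLp.toLp 2 v)),
    (PiLp.volume_preserving_ofLp (Fin m)).comp
      (b.measurePreserving_repr.comp (PiLp.volume_preserving_toLp (Fin m))), ?_, ?_⟩
  · intro v
    have h := b.repr.norm_map (WithLp.toLp 2 v)
    have h2 := congrArg (· ^ 2) h
    simpa only [EuclideanSpace.real_norm_sq_eq] using h2
  · intro v
    have h := b.repr_apply_apply (WithLp.toLp 2 v) i₀
    rw [hb i₀ rfl] at h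
    refine h.trans ?_
    simp [PiLp.inner_apply]

/-- Young's inequality for the conjugate pair `q log q - q`, `exp b`, relative to the weight
`exp (-s)`; the term `-q` is dropped. -/
lemma mul_le_mul_log_add (q b s : ℝ) (hq : 0 ≤ q) :
    q * b ≤ q * Real.log q + q * s + Real.exp (-s) * Real.exp b := by
  rcases hq.eq_or_lt with rfl | hq
  · simp only [zero_mul, zero_add]
    positivity
  · have h := Real.add_one_le_exp (b - s - Real.log q)
    have h1 : q * Real.exp (b - s - Real.log q) = Real.exp (-s) * Real.exp b := by
      rw [Real.exp_sub, Real.exp_log hq, ← Real.exp_add]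
      field_simp
      ring_nf
    have h2 := mul_le_mul_of_nonneg_left h hq.le
    rw [h1] at h2
    linarith

/-- The pointwise bound behind the theorem, with `q` the density, `y = ⟨v, x⟩` and `s = ‖v‖²`; every
term on the right has an integral independent of `x`. -/
lemma abs_mul_log_le (q y s : ℝ) (hq : 0 ≤ q) (hs : y ^ 2 ≤ s) :
    |q * Real.log (|y|)| ≤ 2 * max (q * Real.log q) 0 + 3 * (q * s) +
      2 * (Real.exp (-s) * |y| ^ (-(1 / 2) : ℝ)) := by
  have hqs : 0 ≤ q * s := mul_nonneg hq ((sq_nonneg y).trans hs)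
  have hm := le_max_left (q * Real.log q) 0
  have hm0 := le_max_right (q * Real.log q) 0
  have hw : 0 ≤ Real.exp (-s) * |y| ^ (-(1 / 2) : ℝ) := by positivity
  rcases eq_or_ne y 0 with rfl | hy
    -- At `y = 0` the convention `log 0 = 0` makes the left side vanish.
  · have h0 : |q * Real.log (|(0 : ℝ)|)| = 0 := by simp
    rw [h0]
    linarith
  · have hy' : 0 < |y| := abs_pos.2 hy
    have h1 := mul_le_mul_log_add q (Real.log |y| * (-(1 / 2))) s hq
    rw [← Real.rpow_def_of_pos hy'] at h1
    have h2 : Real.log |y| ≤ s := by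
      have := Real.log_le_sub_one_of_pos hy'
      nlinarith [sq_abs y, sq_nonneg (|y| - 1)]
    have h3 := mul_le_mul_of_nonneg_left h2 hq
    rw [abs_le]
    constructor <;> linarith

/-- Let `V` be a random vector in `ℝ^m` whose law has a density `p` with
respect to Lebesgue measure such that the positive part of `p·log p` is integrable
(i.e. `h(V) > −∞`), and such that `E[‖V‖²] < ∞`.  Then
`inf_{‖x‖ = 1} E[log |⟨V, x⟩|] > −∞`: there is a finite constant `c` such that for every
unit vector `x`, the expectation `E[log |⟨V, x⟩|]` is well defined (finite) and `≥ c`. -/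
theorem expLog_inner_unif_lower_bound (m : ℕ) (hm : 1 ≤ m) (p : (Fin m → ℝ) → ℝ)
    (hmeas : Measurable p) (hpos : ∀ v, 0 ≤ p v)
    (hprob : IsProbabilityMeasure
      ((volume : Measure (Fin m → ℝ)).withDensity fun v => ENNReal.ofReal (p v)))
    (hent : Integrable (fun v => max (p v * Real.log (p v)) 0)
      (volume : Measure (Fin m → ℝ)))
    (hmom : Integrable (fun v : Fin m → ℝ => ∑ i, (v i) ^ 2)
      ((volume : Measure (Fin m → ℝ)).withDensity fun v => ENNReal.ofReal (p v))) :
    ∃ c : ℝ, ∀ x : Fin m → ℝ, (∑ i, (x i) ^ 2) = 1 →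
      Integrable (fun v : Fin m → ℝ => Real.log |∑ i, v i * x i|)
        ((volume : Measure (Fin m → ℝ)).withDensity fun v => ENNReal.ofReal (p v)) ∧
      c ≤ ∫ v : Fin m → ℝ, Real.log |∑ i, v i * x i|
            ∂((volume : Measure (Fin m → ℝ)).withDensity fun v => ENNReal.ofReal (p v)) := by
  set W : (Fin m → ℝ) → ℝ := fun v =>
    Real.exp (-∑ i, (v i) ^ 2) * |v ⟨0, hm⟩| ^ (-(1 / 2) : ℝ) with hW
  have hWint : Integrable W := integrable_gaussian_mul_abs_coord_rpow m ⟨0, hm⟩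
  have hofm : Measurable fun v => ENNReal.ofReal (p v) := hmeas.ennreal_ofReal
  have hfin : ∀ᵐ v ∂(volume : Measure (Fin m → ℝ)), ENNReal.ofReal (p v) < ⊤ :=
    Filter.Eventually.of_forall fun v => ENNReal.ofReal_lt_top
  rw [integrable_withDensity_iff_integrable_smul' hofm hfin] at hmom
  simp only [ENNReal.toReal_ofReal (hpos _), smul_eq_mul] at hmom
  refine ⟨-(2 * (∫ v, max (p v * Real.log (p v)) 0) + 3 * (∫ v, p v * ∑ i, (v i) ^ 2)
    + 2 * ∫ v, W v), fun x hx => ?_⟩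
  obtain ⟨T, hT, hTsq, hT0⟩ := exists_rotation m ⟨0, hm⟩ x hx
  have hWT : Integrable (fun v => W (T v)) := hT.integrable_comp_of_integrable hWint
  have hWTeq : ∫ v, W (T v) = ∫ v, W v := by
    have h := integral_map (μ := volume) hT.measurable.aemeasurable (f := W)
      (by rw [hT.map_eq]; exact hWint.aestronglyMeasurable)
    rw [hT.map_eq] at h
    exact h.symm
  have hbound : ∀ v : Fin m → ℝ, |p v * Real.log (|∑ i, v i * x i|)| ≤
      2 * max (p v * Real.log (p v)) 0 + 3 * (p v * ∑ i, (v i) ^ 2) + 2 * W (T v) := by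
    intro v
    have hcs := Finset.sum_mul_sq_le_sq_mul_sq Finset.univ v x
    rw [hx, mul_one] at hcs
    have h := abs_mul_log_le (p v) (∑ i, v i * x i) (∑ i, (v i) ^ 2) (hpos v) hcs
    simpa only [hW, hTsq, hT0] using h
  have hB1 : Integrable fun v => 2 * max (p v * Real.log (p v)) 0
      + 3 * (p v * ∑ i, (v i) ^ 2) := (hent.const_mul 2).add (hmom.const_mul 3)
  have hB : Integrable fun v => 2 * max (p v * Real.log (p v)) 0
      + 3 * (p v * ∑ i, (v i) ^ 2) + 2 * W (T v) := hB1.add (hWT.const_mul 2)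
  have hlogm : Measurable fun v : Fin m → ℝ => p v * Real.log |∑ i, v i * x i| := by
    have : Measurable fun v : Fin m → ℝ => ∑ i, v i * x i := by fun_prop
    exact hmeas.mul (Real.measurable_log.comp (measurable_norm.comp this))
  have hint : Integrable fun v : Fin m → ℝ => p v * Real.log |∑ i, v i * x i| :=
    hB.mono' hlogm.aestronglyMeasurable (Filter.Eventually.of_forall hbound)
  constructor
  · rw [integrable_withDensity_iff_integrable_smul' hofm hfin]
    simpa only [ENNReal.toReal_ofReal (hpos _), smul_eq_mul] using hint
  · rw [integral_withDensity_eq_integral_toReal_smul hofm hfin]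
    simp only [ENNReal.toReal_ofReal (hpos _), smul_eq_mul]
    have hle := integral_mono hB.neg hint fun v => (abs_le.1 (hbound v)).1
    have heq : ∫ v, (2 * max (p v * Real.log (p v)) 0 + 3 * (p v * ∑ i, (v i) ^ 2)
        + 2 * W (T v)) = 2 * (∫ v, max (p v * Real.log (p v)) 0)
        + 3 * (∫ v, p v * ∑ i, (v i) ^ 2) + 2 * ∫ v, W v := by
      rw [integral_add hB1 (hWT.const_mul 2), integral_add (hent.const_mul 2) (hmom.const_mul 3),
        integral_const_mul, integral_const_mul, integral_const_mul, hWTeq]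
    rw [← heq, ← integral_neg]
    exact hle
end

section
/- For all real numbers a ≥ b > 0, (1/(2π)) ∫₀^{2π} log( a + b cos θ ) dθ = log( ( a + √(a² − b²) ) / 2 ). -/
open MeasureTheory

/-!
With `R = √((a + √(a² − b²)) / 2)` and `u = −b / (2R)`, the integrand is a squared modulus on the
circle of radius `R`: `a + b cos θ = |R e^{iθ} − u|²`. Since `b ≤ a ≤ 2R²`, the point `u` lies in
the closed disc of radius `R`, so by
`circleAverage_log_norm_sub_const_of_mem_closedBall` the mean of `log |z − u|` over the circle is
`log R`, and the required mean is `2 log R = log (R²)`. That lemma includes points on the circle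
itself, which covers `a = b`.
-/

theorem integral_log_add_cos (a b : ℝ) (hb : 0 < b) (hab : b ≤ a) :
    (1 / (2 * Real.pi)) * ∫ θ in (0 : ℝ)..(2 * Real.pi), Real.log (a + b * Real.cos θ) =
      Real.log ((a + Real.sqrt (a ^ 2 - b ^ 2)) / 2) := by
  set s := Real.sqrt (a ^ 2 - b ^ 2) with hs
  have hs0 : 0 ≤ s := Real.sqrt_nonneg _
  have hs2 : s ^ 2 = a ^ 2 - b ^ 2 := Real.sq_sqrt (by nlinarith)
  have hA : 0 < (a + s) / 2 := by linarith
  obtain ⟨R, hR, hR2⟩ : ∃ R : ℝ, 0 < R ∧ R ^ 2 = (a + s) / 2 :=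
    ⟨Real.sqrt ((a + s) / 2), Real.sqrt_pos.2 hA, Real.sq_sqrt hA.le⟩
  obtain ⟨u, hu⟩ : ∃ u : ℝ, 2 * R * u = -b := ⟨-b / (2 * R), by field_simp⟩
  have hu2 : u ^ 2 = (a - s) / 2 := by
    have h1 : ((a + s) / 2) * u ^ 2 = ((a + s) / 2) * ((a - s) / 2) := by
      rw [← hR2]
      linear_combination (2 * R * u - b) / 4 * hu - (a - s) / 2 * hR2 + hs2 / 4
    exact mul_left_cancel₀ hA.ne' h1
  have hmem : (u : ℂ) ∈ Metric.closedBall (0 : ℂ) |R| := by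
    rw [mem_closedBall_zero_iff, Complex.norm_real, Real.norm_eq_abs]
    exact sq_le_sq.1 (by linarith)
  have key : ∀ θ : ℝ, Real.log (a + b * Real.cos θ) = 2 * Real.log ‖circleMap 0 R θ - u‖ := by
    intro θ
    have h : a + b * Real.cos θ = ‖circleMap 0 R θ - u‖ ^ 2 := by
      rw [← Complex.normSq_eq_norm_sq, Complex.normSq_apply]
      simp only [circleMap, zero_add, Complex.exp_mul_I, ← Complex.ofReal_cos,
        ← Complex.ofReal_sin, Complex.sub_re, Complex.sub_im, Complex.mul_re, Complex.mul_im,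
        Complex.add_re, Complex.add_im, Complex.ofReal_re, Complex.ofReal_im, Complex.I_re,
        Complex.I_im]
      linear_combination -hR2 - hu2 + Real.cos θ * hu - R ^ 2 * Real.sin_sq_add_cos_sq θ
    rw [h, Real.log_pow, Nat.cast_ofNat]
  have havg := circleAverage_log_norm_sub_const_of_mem_closedBall hmem
  rw [Real.circleAverage_def, smul_eq_mul] at havg
  simp only [key]
  rw [intervalIntegral.integral_const_mul, one_div, mul_left_comm, havg, ← hR2, Real.log_pow,
    Nat.cast_ofNat]
end

section
/- Let Z be a real centered Gaussian random variable with variance σ² > 0. Then for every c ∈ ℝ, E[ log |Z + c| ] ≥ E[ log |Z| ], with strict inequality whenever c ≠ 0. (Both expectations are finite.) -/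
open MeasureTheory ProbabilityTheory

/-!
Let `φ` be the density of `Z` and `g z = log |z + c| - log |z|`. The reflection `z ↦ -c - z`
preserves Lebesgue measure and changes the sign of `g`, so
`2 E[g(Z)] = ∫ (φ z - φ (-c - z)) g z dz`.
Since `φ` is even and strictly decreasing in `|z|`, the two factors `φ z - φ (-c - z)` and `g z`
have the same sign away from the null set `{0, -c}`, which gives nonnegativity; for `c ≠ 0` the
product is positive on a half-line.

Integrability holds because `|log x| ≤ |x|` for `|x| ≥ 1`, while on `(-1, 1]` the Gaussian measure
is dominated by a multiple of Lebesgue measure, for which `log` is locally integrable.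
-/

lemma gaussianPDFReal_le_const (m : ℝ) (v : NNReal) (x : ℝ) :
    gaussianPDFReal m v x ≤ (√(2 * Real.pi * v))⁻¹ := by
  rw [gaussianPDFReal]
  apply mul_le_of_le_one_right (by positivity)
  rw [Real.exp_le_one_iff]
  apply div_nonpos_of_nonpos_of_nonneg
  · nlinarith [sq_nonneg (x - m)]
  · positivity

lemma integrable_log_gaussianReal (m : ℝ) {v : NNReal} (hv : v ≠ 0) :
    Integrable Real.log (gaussianReal m v) := by
  have hle : gaussianReal m v ≤ ENNReal.ofReal (√(2 * Real.pi * v))⁻¹ • volume := by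
    rw [gaussianReal_of_var_ne_zero _ hv, ← withDensity_const]
    exact withDensity_mono (ae_of_all _ fun x =>
      ENNReal.ofReal_le_ofReal (gaussianPDFReal_le_const m v x))
  have h0 : IntegrableOn Real.log (Set.Ioc (-1) 1) volume :=
    (intervalIntegrable_iff_integrableOn_Ioc_of_le (by norm_num)).1
      intervalIntegral.intervalIntegrable_log'
  have h1 : Integrable ((Set.Ioc (-1 : ℝ) 1).indicator Real.log) (gaussianReal m v) :=
    (((integrable_indicator_iff measurableSet_Ioc).2 h0).smul_measure
      ENNReal.ofReal_ne_top).mono_measure hle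
  have h2 : Integrable (fun x : ℝ => x) (gaussianReal m v) :=
    (memLp_id_gaussianReal (μ := m) (v := v) 1).integrable le_rfl
  refine (h2.norm.add h1.norm).mono' Real.measurable_log.aestronglyMeasurable
    (ae_of_all _ fun x => ?_)
  by_cases hx : x ∈ Set.Ioc (-1 : ℝ) 1
  · simp [Set.indicator_of_mem hx]
  · have h1x : 1 ≤ |x| := by
      by_contra! h
      exact hx ⟨(abs_lt.1 h).1, (abs_lt.1 h).2.le⟩
    simp only [Pi.add_apply, Set.indicator_of_notMem hx, Real.norm_eq_abs, abs_zero, add_zero]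
    rw [← Real.log_abs, abs_of_nonneg (Real.log_nonneg h1x)]
    exact Real.log_le_self (abs_nonneg x)

lemma integrable_log_abs_add_gaussianReal {v : NNReal} (hv : v ≠ 0) (c : ℝ) :
    Integrable (fun z => Real.log |z + c|) (gaussianReal 0 v) := by
  have h := integrable_log_gaussianReal (0 + c) hv
  rw [← gaussianReal_map_add_const c] at h
  simpa only [Real.log_abs, Function.comp_def, id_eq] using h.comp_measurable (measurable_id.add_const c)

lemma gaussianPDFReal_zero_lt_of_abs_lt {v : NNReal} (hv : 0 < v) {a b : ℝ} (h : |a| < |b|) :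
    gaussianPDFReal 0 v b < gaussianPDFReal 0 v a := by
  have hv' : (0 : ℝ) < v := hv
  have := sq_lt_sq.2 h
  simp only [gaussianPDFReal, sub_zero]
  gcongr

/-- Twice the increment of the expected logarithm, symmetrized under `z ↦ -c - z`. -/
lemma two_mul_integral_log_sub {v : NNReal} (hv : v ≠ 0) (c : ℝ) :
    Integrable (fun z => (gaussianPDFReal 0 v z - gaussianPDFReal 0 v (-c - z)) *
      (Real.log |z + c| - Real.log |z|)) ∧
    ∫ z, (gaussianPDFReal 0 v z - gaussianPDFReal 0 v (-c - z)) *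
      (Real.log |z + c| - Real.log |z|) =
    2 * ((∫ z, Real.log |z + c| ∂gaussianReal 0 v) - ∫ z, Real.log |z| ∂gaussianReal 0 v) := by
  have hc := integrable_log_abs_add_gaussianReal hv c
  have h0 : Integrable (fun z => Real.log |z|) (gaussianReal 0 v) := by
    simpa using integrable_log_abs_add_gaussianReal hv 0
  set g : ℝ → ℝ := fun z => Real.log |z + c| - Real.log |z| with hg
  have hgi : Integrable g (gaussianReal 0 v) := hc.sub h0
  have hF : Integrable (fun z => gaussianPDFReal 0 v z * g z) := by
    rw [gaussianReal_of_var_ne_zero _ hv,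
      integrable_withDensity_iff (measurable_gaussianPDF 0 v)
        (ae_of_all _ fun _ => gaussianPDF_lt_top)] at hgi
    simpa [toReal_gaussianPDF, mul_comm] using hgi
  have hodd : ∀ z, g (-c - z) = -g z := fun z => by
    simp only [hg]
    rw [show -c - z + c = -z by ring, show -c - z = -(z + c) by ring, abs_neg, abs_neg]
    ring
  have heq : (fun z => (gaussianPDFReal 0 v z - gaussianPDFReal 0 v (-c - z)) * g z) =
      fun z => gaussianPDFReal 0 v z * g z + gaussianPDFReal 0 v (-c - z) * g (-c - z) := by
    funext z
    rw [hodd]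
    ring
  have hF' := hF.comp_sub_left (-c)
  refine ⟨heq ▸ hF.add hF', ?_⟩
  change ∫ z, (gaussianPDFReal 0 v z - gaussianPDFReal 0 v (-c - z)) * g z = _
  rw [heq, integral_add hF hF',
    integral_sub_left_eq_self (fun z => gaussianPDFReal 0 v z * g z) volume (-c),
    ← integral_sub hc h0, integral_gaussianReal_eq_integral_smul hv]
  simp only [smul_eq_mul, hg]
  ring

/-- The symmetrized integrand is positive except where `log 0` occurs or `|z + c| = |z|`. -/
lemma symmetrized_pos_s15 {v : NNReal} (hv : 0 < v) {c z : ℝ} (hz : z ≠ 0) (hzc : z + c ≠ 0)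
    (hne : |z + c| ≠ |z|) :
    0 < (gaussianPDFReal 0 v z - gaussianPDFReal 0 v (-c - z)) *
      (Real.log |z + c| - Real.log |z|) := by
  have habs : |-c - z| = |z + c| := by rw [← abs_neg]; congr 1; ring
  rcases lt_or_gt_of_ne hne with h | h
  · have h1 := gaussianPDFReal_zero_lt_of_abs_lt hv (habs.trans_lt h)
    have h2 := Real.log_lt_log (abs_pos.2 hzc) h
    exact mul_pos_of_neg_of_neg (by linarith) (by linarith)
  · have h1 := gaussianPDFReal_zero_lt_of_abs_lt hv (h.trans_eq habs.symm)
    have h2 := Real.log_lt_log (abs_pos.2 hz) h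
    exact mul_pos (by linarith) (by linarith)

lemma integral_log_abs_lt {v : NNReal} (hv : 0 < v) {c : ℝ} (hc : c ≠ 0) :
    (∫ z, Real.log |z| ∂gaussianReal 0 v) < ∫ z, Real.log |z + c| ∂gaussianReal 0 v := by
  obtain ⟨hi, he⟩ := two_mul_integral_log_sub hv.ne' c
  suffices h : 0 < ∫ z, (gaussianPDFReal 0 v z - gaussianPDFReal 0 v (-c - z)) *
      (Real.log |z + c| - Real.log |z|) by linarith
  rw [integral_pos_iff_support_of_nonneg_ae _ hi]
  -- on `(|c|, ∞)` both `z` and `z + c` are positive and distinct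
  · refine lt_of_lt_of_le (b := volume (Set.Ioi |c|)) (by simp) (measure_mono fun z hz => ?_)
    have hz' : |c| < z := hz
    have h1 : 0 < z := (abs_nonneg c).trans_lt hz'
    have h2 : 0 < z + c := by linarith [neg_abs_le c]
    refine (symmetrized_pos_s15 hv h1.ne' h2.ne' ?_).ne'
    rw [abs_of_pos h1, abs_of_pos h2]
    simpa using hc
  · filter_upwards [Measure.ae_ne volume 0, Measure.ae_ne volume (-c)] with z h1 h2
    by_cases hne : |z + c| = |z|
    · simp [hne]
    · exact (symmetrized_pos_s15 hv h1 (fun h => h2 (by linarith)) hne).le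

/-- Let `Z` be a real centered Gaussian with variance `v > 0`.  Then for
every `c ∈ ℝ`, both `E[log |Z + c|]` and `E[log |Z|]` are finite and
`E[log |Z + c|] ≥ E[log |Z|]`, with strict inequality whenever `c ≠ 0`. -/
theorem expLog_abs_gaussian_add_const_ge (v : NNReal) (hv : 0 < v) (c : ℝ) :
    Integrable (fun z => Real.log |z + c|) (gaussianReal 0 v) ∧
    Integrable (fun z => Real.log |z|) (gaussianReal 0 v) ∧
    (∫ z, Real.log |z| ∂gaussianReal 0 v) ≤ (∫ z, Real.log |z + c| ∂gaussianReal 0 v) ∧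
    (c ≠ 0 → (∫ z, Real.log |z| ∂gaussianReal 0 v) < ∫ z, Real.log |z + c| ∂gaussianReal 0 v) := by
  refine ⟨integrable_log_abs_add_gaussianReal hv.ne' c, ?_, ?_, integral_log_abs_lt hv⟩
  · simpa using integrable_log_abs_add_gaussianReal hv.ne' 0
  · rcases eq_or_ne c 0 with rfl | hc
    · simp
    · exact (integral_log_abs_lt hv hc).le
end
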